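/- Let Z = X + sqrt(theta)·g·u^T where X ~ N(0, I_n)^{⊗d} (columns i.i.d. standard Gaussian in R^n), g ~ N(0, I_n) independent of X, u ∈ R^d a fixed unit vector, and theta > 0. Then d_TV(Law(X + sqrt(theta)·g·u^T), Law(X + sqrt(theta)·(sqrt(n)/||g||)·g·u^T)) = O(sqrt(theta)), with implicit constant universal. -/

import Mathlib

open MeasureTheory ProbabilityTheory

noncomputable def tvDist {α : Type*} [MeasurableSpace α] (P Q : Measure α) : ℝ :=
  ⨆ s : {s : Set α // MeasurableSet s}, |(P s).toReal - (Q s).toReal|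

noncomputable def stdGaussian (n : ℕ) : Measure (Fin n → ℝ) :=
  Measure.pi fun _ => gaussianReal 0 1

noncomputable def euclNorm {n : ℕ} (x : Fin n → ℝ) : ℝ := Real.sqrt (∑ i, x i ^ 2)

/-!
Conditioning on `g` turns both laws into mixtures of shifts of the same Gaussian matrix, so by
convexity of total variation it suffices to compare the shifts for each `g` and average. Shifting a
standard Gaussian by `A` tilts it by a linear form of variance `‖A‖²`, and tilting by a Gaussian
variable of variance `v` gives Bhattacharyya affinity `exp (-v / 8)`, hence total variation at most
`√(1 - exp (-v / 4)) ≤ √v / 2`. The two shifts differ in Frobenius norm by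
`√θ |‖g‖ - √n| ≤ √θ |‖g‖² - n| / √n`, whose mean is `O(√θ)` because `‖g‖²` is a sum of `n`
independent squares: its mean is `n` and its variance is of order `n`.
-/

section TotalVariation

variable {α β γ : Type*} [MeasurableSpace α] [MeasurableSpace β] [MeasurableSpace γ]

lemma tvDist_le_of_forall {P Q : Measure α} {c : ℝ}
    (h : ∀ s, MeasurableSet s → |P.real s - Q.real s| ≤ c) : tvDist P Q ≤ c :=
  have : Nonempty {s : Set α // MeasurableSet s} := ⟨⟨∅, .empty⟩⟩
  ciSup_le fun s => h s s.2

lemma abs_measureReal_sub_le_tvDist (P Q : Measure α) [IsProbabilityMeasure P]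
    [IsProbabilityMeasure Q] {s : Set α} (hs : MeasurableSet s) :
    |P.real s - Q.real s| ≤ tvDist P Q := by
  refine le_ciSup (f := fun t : {t : Set α // MeasurableSet t} => |P.real t - Q.real t|)
    ⟨1, ?_⟩ ⟨s, hs⟩
  rintro _ ⟨t, rfl⟩
  exact abs_sub_le_of_nonneg_of_le measureReal_nonneg measureReal_le_one measureReal_nonneg
    measureReal_le_one

lemma tvDist_map_le (P Q : Measure α) [IsProbabilityMeasure P] [IsProbabilityMeasure Q]
    {f : α → β} (hf : Measurable f) : tvDist (P.map f) (Q.map f) ≤ tvDist P Q := by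
  refine tvDist_le_of_forall fun s hs => ?_
  rw [map_measureReal_apply hf hs, map_measureReal_apply hf hs]
  exact abs_measureReal_sub_le_tvDist P Q (hf hs)

lemma measureReal_bind {σ : Measure β} {κ : β → Measure γ} [∀ y, IsFiniteMeasure (κ y)]
    (hκ : Measurable κ) {s : Set γ} (hs : MeasurableSet s) :
    (σ.bind κ).real s = ∫ y, (κ y).real s ∂σ := by
  rw [measureReal_def, Measure.bind_apply hs hκ.aemeasurable]
  exact (integral_toReal ((Measure.measurable_coe hs).comp hκ).aemeasurable
    (ae_of_all _ fun y => measure_lt_top _ _)).symm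

lemma integrable_measureReal {σ : Measure β} [IsFiniteMeasure σ] {κ : β → Measure γ}
    [∀ y, IsProbabilityMeasure (κ y)] (hκ : Measurable κ) {s : Set γ} (hs : MeasurableSet s) :
    Integrable (fun y => (κ y).real s) σ := by
  have hmeas : Measurable fun y => (κ y).real s :=
    ((Measure.measurable_coe hs).comp hκ).ennreal_toReal
  refine .of_bound hmeas.aestronglyMeasurable 1 (ae_of_all _ fun y => ?_)
  rw [Real.norm_of_nonneg measureReal_nonneg]
  exact measureReal_le_one

lemma tvDist_bind_le {σ : Measure β} [IsFiniteMeasure σ] {κ η : β → Measure γ}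
    [∀ y, IsProbabilityMeasure (κ y)] [∀ y, IsProbabilityMeasure (η y)] (hκ : Measurable κ)
    (hη : Measurable η) {k : β → ℝ} (hk : Integrable k σ) (h : ∀ y, tvDist (κ y) (η y) ≤ k y) :
    tvDist (σ.bind κ) (σ.bind η) ≤ ∫ y, k y ∂σ := by
  refine tvDist_le_of_forall fun s hs => ?_
  have hκs := integrable_measureReal (σ := σ) hκ hs
  have hηs := integrable_measureReal (σ := σ) hη hs
  rw [measureReal_bind hκ hs, measureReal_bind hη hs, ← integral_sub hκs hηs]
  exact abs_integral_le_integral_abs.trans <| integral_mono (hκs.sub hηs).abs hk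
    fun y => (abs_measureReal_sub_le_tvDist _ _ hs).trans (h y)

lemma measurable_map_prodMk_right (μ : Measure α) [SFinite μ] {F : α × β → γ}
    (hF : Measurable F) : Measurable fun y => μ.map fun x => F (x, y) := by
  refine Measure.measurable_of_measurable_coe _ fun s hs => ?_
  simp_rw [fun y => Measure.map_apply (μ := μ) (f := fun x => F (x, y)) (by fun_prop) hs]
  exact measurable_measure_prodMk_right (hF hs)

lemma map_prod_eq_bind (μ : Measure α) (σ : Measure β) [SFinite μ] [SFinite σ]
    {F : α × β → γ} (hF : Measurable F) :
    (μ.prod σ).map F = σ.bind fun y => μ.map fun x => F (x, y) := by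
  ext s hs
  rw [Measure.map_apply hF hs, Measure.prod_apply_symm (hF hs),
    Measure.bind_apply hs (measurable_map_prodMk_right μ hF).aemeasurable]
  simp_rw [fun y => Measure.map_apply (μ := μ) (f := fun x => F (x, y)) (by fun_prop) hs]
  rfl

end TotalVariation

section SecondMoment

variable {α : Type*} [MeasurableSpace α] {μ : Measure α}

lemma integral_abs_mul_abs_le_sqrt_mul_sqrt {f g : α → ℝ} (hf : MemLp f 2 μ)
    (hg : MemLp g 2 μ) :
    ∫ x, |f x| * |g x| ∂μ ≤ √(∫ x, f x ^ 2 ∂μ) * √(∫ x, g x ^ 2 ∂μ) := by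
  have h := integral_mul_norm_le_Lp_mul_Lq (μ := μ) (f := f) (g := g) .two_two
    (by simpa using hf) (by simpa using hg)
  simpa [Real.sqrt_eq_rpow] using h

lemma integral_abs_sub_integral_le_sqrt_variance [IsProbabilityMeasure μ] {X : α → ℝ}
    (hX : MemLp X 2 μ) : ∫ x, |X x - μ[X]| ∂μ ≤ √Var[X; μ] := by
  have h := integral_abs_mul_abs_le_sqrt_mul_sqrt (hX.sub (memLp_const μ[X]))
    (memLp_const (μ := μ) (1 : ℝ))
  simpa [variance_eq_integral hX.aemeasurable] using h

lemma abs_setIntegral_le_half_integral_abs {f : α → ℝ} (hf : Integrable f μ)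
    (h0 : ∫ x, f x ∂μ = 0) {s : Set α} (hs : MeasurableSet s) :
    |∫ x in s, f x ∂μ| ≤ (∫ x, |f x| ∂μ) / 2 := by
  have hcompl : ∫ x in sᶜ, f x ∂μ = -∫ x in s, f x ∂μ := by
    linarith [integral_add_compl hs hf]
  have hle : |∫ x in s, f x ∂μ| ≤ ∫ x in s, |f x| ∂μ := abs_integral_le_integral_abs
  have hle_compl : |∫ x in s, f x ∂μ| ≤ ∫ x in sᶜ, |f x| ∂μ := by
    rw [← abs_neg, ← hcompl]
    exact abs_integral_le_integral_abs
  linarith [integral_add_compl hs hf.abs]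

lemma measureReal_withDensity_sq {h : α → ℝ} (hh : MemLp h 2 μ) {s : Set α}
    (hs : MeasurableSet s) :
    (μ.withDensity fun x => ENNReal.ofReal (h x ^ 2)).real s = ∫ x in s, h x ^ 2 ∂μ := by
  rw [measureReal_def, withDensity_apply _ hs,
    integral_eq_lintegral_of_nonneg_ae (ae_of_all _ fun x => sq_nonneg (h x))
      hh.integrable_sq.aestronglyMeasurable.restrict]

/-- Here `∫ h` is the Bhattacharyya affinity of the two measures: this is the Hellinger bound. -/
lemma tvDist_withDensity_sq_le [IsProbabilityMeasure μ] {h : α → ℝ} (hh : MemLp h 2 μ)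
    (hone : ∫ x, h x ^ 2 ∂μ = 1) :
    tvDist (μ.withDensity fun x => ENNReal.ofReal (h x ^ 2)) μ ≤
      √(1 - (∫ x, h x ∂μ) ^ 2) := by
  have hint : Integrable h μ := hh.integrable one_le_two
  have hsq : Integrable (fun x => h x ^ 2) μ := hh.integrable_sq
  have hdiff : Integrable (fun x => h x ^ 2 - 1) μ := hsq.sub (integrable_const 1)
  have hmean : ∫ x, (h x ^ 2 - 1) ∂μ = 0 := by
    rw [integral_sub hsq (integrable_const 1), hone]
    simp
  have hexpand (c : ℝ) : ∫ x, (h x + c) ^ 2 ∂μ = 1 + 2 * c * ∫ x, h x ∂μ + c ^ 2 := by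
    simp_rw [add_sq, mul_right_comm _ (h _)]
    have hlin : Integrable (fun x => 2 * c * h x) μ := hint.const_mul _
    have hquad : Integrable (fun x => h x ^ 2 + 2 * c * h x) μ := hsq.add hlin
    rw [integral_add hquad (integrable_const _), integral_add hsq hlin, integral_const_mul, hone]
    simp
  refine tvDist_le_of_forall fun s hs => ?_
  calc |(μ.withDensity fun x => ENNReal.ofReal (h x ^ 2)).real s - μ.real s|
      = |∫ x in s, (h x ^ 2 - 1) ∂μ| := by
        rw [measureReal_withDensity_sq hh hs,
          integral_sub hsq.restrict (integrable_const 1)]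
        simp
    _ ≤ (∫ x, |h x ^ 2 - 1| ∂μ) / 2 := abs_setIntegral_le_half_integral_abs hdiff hmean hs
    _ = (∫ x, |h x + -1| * |h x + 1| ∂μ) / 2 := by
        congr! 3 with x
        rw [← abs_mul]
        ring_nf
    _ ≤ √(∫ x, (h x + -1) ^ 2 ∂μ) * √(∫ x, (h x + 1) ^ 2 ∂μ) / 2 := by
        gcongr
        exact integral_abs_mul_abs_le_sqrt_mul_sqrt (hh.add (memLp_const _))
          (hh.add (memLp_const _))
    _ = √(1 - (∫ x, h x ∂μ) ^ 2) := by
        rw [← Real.sqrt_mul (integral_nonneg fun x => sq_nonneg _), hexpand, hexpand,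
          div_eq_iff two_ne_zero, ← Real.sqrt_sq (zero_le_two (α := ℝ)),
          ← Real.sqrt_mul' _ (sq_nonneg 2)]
        ring_nf

end SecondMoment

section Tilting

variable {α : Type*} [MeasurableSpace α] {μ : Measure α} {f : α → ℝ}

lemma tvDist_tilted_le [IsProbabilityMeasure μ] (hf : Integrable (fun x => Real.exp (f x)) μ) :
    tvDist (μ.tilted f) μ ≤ √(1 - mgf f μ (1 / 2) ^ 2 / mgf f μ 1) := by
  have hZ : 0 < ∫ x, Real.exp (f x) ∂μ := integral_exp_pos hf
  set Z := ∫ x, Real.exp (f x) ∂μ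
  let h : α → ℝ := fun x => Real.exp (1 / 2 * f x) / √Z
  have hsq (x : α) : h x ^ 2 = Real.exp (f x) / Z := by
    rw [div_pow, Real.sq_sqrt hZ.le, ← Real.exp_nat_mul]
    ring_nf
  have hmeas : AEMeasurable f μ := 
    Real.aemeasurable_of_aemeasurable_exp hf.aemeasurable
  have hL2 : MemLp h 2 μ := by
    refine (memLp_two_iff_integrable_sq (by fun_prop)).2 ?_
    simpa only [hsq] using hf.div_const Z
  have hone : ∫ x, h x ^ 2 ∂μ = 1 := by
    simp_rw [hsq]
    rw [integral_div, div_self hZ.ne']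
  have haffinity : (∫ x, h x ∂μ) ^ 2 = mgf f μ (1 / 2) ^ 2 / mgf f μ 1 := by
    rw [integral_div, div_pow, Real.sq_sqrt hZ.le]
    simp [mgf, Z]
  have htilted : μ.tilted f = μ.withDensity fun x => ENNReal.ofReal (h x ^ 2) := by
    simp_rw [hsq]
    rfl
  rw [htilted, ← haffinity]
  exact tvDist_withDensity_sq_le hL2 hone

lemma tvDist_tilted_le_of_mgf_eq_exp [IsProbabilityMeasure μ] {m v : ℝ}
    (h : ∀ t, mgf f μ t = Real.exp (m * t + v * t ^ 2 / 2)) :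
    tvDist (μ.tilted f) μ ≤ √v / 2 := by
  have hint : Integrable (fun x => Real.exp (f x)) μ := by
    refine .of_integral_ne_zero ?_
    simpa [mgf] using (h 1).trans_ne (Real.exp_pos _).ne'
  calc tvDist (μ.tilted f) μ
      ≤ √(1 - mgf f μ (1 / 2) ^ 2 / mgf f μ 1) := tvDist_tilted_le hint
    _ = √(1 - Real.exp (-(v / 4))) := by
        rw [h, h, ← Real.exp_nat_mul, ← Real.exp_sub]
        ring_nf
    _ ≤ √(v / 4) := Real.sqrt_le_sqrt (by linarith [Real.one_sub_le_exp_neg (v / 4)])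
    _ = √v / 2 := by
        rw [Real.sqrt_div' _ (by norm_num), show (4 : ℝ) = 2 ^ 2 by norm_num,
          Real.sqrt_sq zero_le_two]

end Tilting

section PiTilting

variable {ι : Type*} [Fintype ι] {E : ι → Type*} [∀ i, MeasurableSpace (E i)]
  {μ : ∀ i, Measure (E i)} {f : ∀ i, E i → ℝ}

lemma mgf_pi_sum [∀ i, SigmaFinite (μ i)] (t : ℝ) :
    mgf (fun x => ∑ i, f i (x i)) (Measure.pi μ) t = ∏ i, mgf (f i) (μ i) t := by
  simp only [mgf, Finset.mul_sum, Real.exp_sum]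
  exact integral_fintype_prod_eq_prod fun i y => Real.exp (t * f i y)

lemma pi_tilted [∀ i, SigmaFinite (μ i)] :
    Measure.pi (fun i => (μ i).tilted (f i)) =
      (Measure.pi μ).tilted fun x => ∑ i, f i (x i) := by
  refine Measure.pi_eq fun s _ => ?_
  simp only [tilted_apply_eq_ofReal_integral, Real.exp_sum]
  rw [Measure.restrict_pi_pi, integral_fintype_prod_eq_prod fun i y => Real.exp (f i y),
    ← ENNReal.ofReal_prod_of_nonneg fun i _ => integral_nonneg fun y => by positivity]
  simp_rw [← Finset.prod_div_distrib]
  rw [integral_fintype_prod_eq_prod fun i y => Real.exp (f i y) / ∫ z, Real.exp (f i z) ∂μ i]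

lemma pi_map_add_eq_tilted [∀ i, IsProbabilityMeasure (μ i)] [∀ i, Add (E i)]
    [∀ i, MeasurableAdd (E i)] {a : ∀ i, E i}
    (h : ∀ i, (μ i).map (· + a i) = (μ i).tilted (f i)) :
    (Measure.pi μ).map (· + a) = (Measure.pi μ).tilted fun x => ∑ i, f i (x i) := by
  have : ∀ i, IsFiniteMeasure ((μ i).map (· + a i)) := fun i => inferInstance
  rw [← pi_tilted]
  simp_rw [← h]
  exact Measure.pi_map_pi (μ := μ) (f := fun i x => x + a i) fun i => by fun_prop

end PiTilting

section Gaussian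

open scoped NNReal

lemma gaussianReal_tilted_mul (b c : ℝ) {v : ℝ≥0} (hv : v ≠ 0) :
    (gaussianReal b v).tilted (fun x => c * x) = gaussianReal (b + v * c) v := by
  have hZ : ∫ x, Real.exp (c * x) ∂gaussianReal b v = Real.exp (b * c + v * c ^ 2 / 2) :=
    congrFun mgf_fun_id_gaussianReal c
  have hv' : (v : ℝ) ≠ 0 := by exact_mod_cast hv
  rw [Measure.tilted, hZ, gaussianReal_of_var_ne_zero _ hv, gaussianReal_of_var_ne_zero _ hv,
    ← withDensity_mul _ (measurable_gaussianPDF _ _) (by fun_prop)]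
  congr 1
  ext x
  simp only [Pi.mul_apply, gaussianPDF, gaussianPDFReal]
  rw [← ENNReal.ofReal_mul (by positivity), ← Real.exp_sub, mul_assoc, ← Real.exp_add]
  congr 3
  field_simp
  ring

lemma memLp_sq_gaussianReal (m : ℝ) (v : ℝ≥0) :
    MemLp (fun x => x ^ 2) 2 (gaussianReal m v) := by
  refine (memLp_two_iff_integrable_sq (by fun_prop)).2 ?_
  have h4 := (memLp_id_gaussianReal (μ := m) (v := v) 4).integrable_norm_pow (p := 4) (by simp)
  simpa [← pow_mul, Even.pow_abs (by decide : Even 4)] using h4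

lemma integral_sq_gaussianReal (m : ℝ) (v : ℝ≥0) :
    ∫ x, x ^ 2 ∂gaussianReal m v = m ^ 2 + v := by
  have h := variance_eq_sub (memLp_id_gaussianReal (μ := m) (v := v) 2)
  simp only [variance_id_gaussianReal, Pi.pow_apply, id_eq, integral_id_gaussianReal] at h
  linarith

instance isProbabilityMeasure_stdGaussian (n : ℕ) : IsProbabilityMeasure (stdGaussian n) :=
  inferInstanceAs (IsProbabilityMeasure (Measure.pi _))

variable {d n : ℕ}

lemma map_add_stdGaussian (a : Fin n → ℝ) :
    (stdGaussian n).map (· + a) = (stdGaussian n).tilted fun x => ∑ j, a j * x j := by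
  refine pi_map_add_eq_tilted fun j => ?_
  rw [gaussianReal_map_add_const, gaussianReal_tilted_mul _ _ one_ne_zero]
  simp

lemma mgf_stdGaussian (a : Fin n → ℝ) (t : ℝ) :
    mgf (fun x => ∑ j, a j * x j) (stdGaussian n) t =
      Real.exp ((∑ j, a j ^ 2) * t ^ 2 / 2) := by
  have hcoord (j : Fin n) :
      mgf (fun x => a j * x) (gaussianReal 0 1) t = Real.exp (a j ^ 2 * t ^ 2 / 2) := by
    rw [mgf_const_mul, mgf_fun_id_gaussianReal]
    simp [mul_pow]
  refine (mgf_pi_sum t).trans ?_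
  simp_rw [hcoord, ← Real.exp_sum, Finset.sum_mul, Finset.sum_div]

/-- The Frobenius norm of the matrix with columns `A i`, the size of a shift of the Gaussian data
matrix. Mathlib's Frobenius norm is an instance on `Matrix`, while the data matrix is a plain
family of columns. -/
noncomputable def frobeniusNorm (A : Fin d → Fin n → ℝ) : ℝ := √(∑ i, ∑ j, A i j ^ 2)

lemma frobeniusNorm_mul_mul (c : ℝ) (u : Fin d → ℝ) (g : Fin n → ℝ) :
    frobeniusNorm (fun i j => c * u i * g j) = |c| * euclNorm u * euclNorm g := by
  simp_rw [frobeniusNorm, mul_pow, ← Finset.mul_sum, ← Finset.sum_mul]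
  rw [← Finset.mul_sum, Real.sqrt_mul (by positivity), Real.sqrt_mul (by positivity),
    Real.sqrt_sq_eq_abs]
  rfl

lemma tvDist_map_add_self_le (A : Fin d → Fin n → ℝ) :
    tvDist ((Measure.pi fun _ => stdGaussian n).map (· + A)) (Measure.pi fun _ => stdGaussian n) ≤
      frobeniusNorm A / 2 := by
  rw [pi_map_add_eq_tilted fun i => map_add_stdGaussian (A i)]
  refine tvDist_tilted_le_of_mgf_eq_exp (m := 0) fun t => ?_
  rw [mgf_pi_sum (f := fun i (y : Fin n → ℝ) => ∑ j, A i j * y j)]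
  simp_rw [mgf_stdGaussian, ← Real.exp_sum, Finset.sum_mul, Finset.sum_div]
  simp

lemma tvDist_map_add_map_add_le (A B : Fin d → Fin n → ℝ) :
    tvDist ((Measure.pi fun _ => stdGaussian n).map (· + A))
        ((Measure.pi fun _ => stdGaussian n).map (· + B)) ≤
      frobeniusNorm (A - B) / 2 := by
  set γ : Measure (Fin d → Fin n → ℝ) := Measure.pi fun _ => stdGaussian n
  have : IsProbabilityMeasure (γ.map (· + (A - B))) :=
    Measure.isProbabilityMeasure_map (by fun_prop)
  have hcomp : γ.map (· + A) = (γ.map (· + (A - B))).map (· + B) := by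
    rw [Measure.map_map (by fun_prop) (by fun_prop)]
    congr 1
    ext x
    simp [add_assoc]
  rw [hcomp]
  exact (tvDist_map_le _ _ (by fun_prop)).trans (tvDist_map_add_self_le _)

lemma tvDist_map_add_prod_le {β : Type*} [MeasurableSpace β] (σ : Measure β)
    [IsFiniteMeasure σ] {A B : β → Fin d → Fin n → ℝ} (hA : Measurable A) (hB : Measurable B)
    {k : β → ℝ} (hk : Integrable k σ) (h : ∀ y, frobeniusNorm (A y - B y) ≤ k y) :
    tvDist (((Measure.pi fun _ => stdGaussian n).prod σ).map fun p => p.1 + A p.2)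
        (((Measure.pi fun _ => stdGaussian n).prod σ).map fun p => p.1 + B p.2) ≤
      (∫ y, k y ∂σ) / 2 := by
  have hmeas {S : β → Fin d → Fin n → ℝ} (hS : Measurable S) :
      Measurable fun p : (Fin d → Fin n → ℝ) × β => p.1 + S p.2 := by fun_prop
  have hprob (S : β → Fin d → Fin n → ℝ) (y : β) :
      IsProbabilityMeasure ((Measure.pi fun _ : Fin d => stdGaussian n).map (· + S y)) :=
    Measure.isProbabilityMeasure_map (by fun_prop)
  rw [map_prod_eq_bind _ _ (hmeas hA), map_prod_eq_bind _ _ (hmeas hB), ← integral_div]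
  have := hprob A
  have := hprob B
  refine tvDist_bind_le (measurable_map_prodMk_right _ (hmeas hA))
    (measurable_map_prodMk_right _ (hmeas hB)) (hk.div_const 2) fun y => ?_
  exact (tvDist_map_add_map_add_le (A y) (B y)).trans (by gcongr; exact h y)

end Gaussian

section Normalization

variable {n : ℕ}

lemma euclNorm_nonneg (x : Fin n → ℝ) : 0 ≤ euclNorm x := Real.sqrt_nonneg _

lemma euclNorm_sq (x : Fin n → ℝ) : euclNorm x ^ 2 = ∑ i, x i ^ 2 :=
  Real.sq_sqrt (Finset.sum_nonneg fun _ _ => sq_nonneg _)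

@[fun_prop]
lemma measurable_euclNorm : Measurable (euclNorm : (Fin n → ℝ) → ℝ) := by
  unfold euclNorm
  fun_prop

lemma abs_sub_le_abs_sq_sub_sq_div {r s : ℝ} (hr : 0 ≤ r) (hs : 0 < s) :
    |r - s| ≤ |r ^ 2 - s ^ 2| / s := by
  rw [le_div_iff₀ hs, sq_sub_sq, abs_mul, mul_comm, abs_of_nonneg (by positivity : 0 ≤ r + s)]
  gcongr
  linarith

lemma abs_one_sub_sqrt_div_euclNorm_mul_euclNorm_le (x : Fin n → ℝ) :
    |1 - √n / euclNorm x| * euclNorm x ≤ |euclNorm x ^ 2 - n| / √n := by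
  rcases (euclNorm_nonneg x).eq_or_lt with h0 | hpos
  · rw [← h0, mul_zero]
    positivity
  have hn : 0 < √(n : ℝ) := by
    rcases n.eq_zero_or_pos with rfl | hn
    · simp [euclNorm] at hpos
    · positivity
  calc |1 - √n / euclNorm x| * euclNorm x = |euclNorm x - √n| := by
        rw [← abs_of_pos hpos, ← abs_mul, abs_of_pos hpos, sub_mul, one_mul,
          div_mul_cancel₀ _ hpos.ne']
    _ ≤ |euclNorm x ^ 2 - √n ^ 2| / √n := abs_sub_le_abs_sq_sub_sq_div hpos.le hn
    _ = |euclNorm x ^ 2 - n| / √n := by rw [Real.sq_sqrt n.cast_nonneg]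

lemma frobeniusNorm_spike_sub_normalized_spike_le {d : ℕ} (c : ℝ) (u : Fin d → ℝ)
    (g : Fin n → ℝ) :
    frobeniusNorm ((fun i j => c * u i * g j) - fun i j => c * (√n / euclNorm g) * u i * g j) ≤
      |c| * euclNorm u * (|euclNorm g ^ 2 - n| / √n) := by
  have hsub : ((fun i j => c * u i * g j) - fun i j => c * (√n / euclNorm g) * u i * g j) =
      fun i j => c * (1 - √n / euclNorm g) * u i * g j := by
    ext i j
    simp only [Pi.sub_apply]
    ring
  have hu := euclNorm_nonneg u
  calc frobeniusNorm ((fun i j => c * u i * g j) -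
        fun i j => c * (√n / euclNorm g) * u i * g j)
      = |c| * euclNorm u * (|1 - √n / euclNorm g| * euclNorm g) := by
        rw [hsub, frobeniusNorm_mul_mul, abs_mul]
        ring
    _ ≤ |c| * euclNorm u * (|euclNorm g ^ 2 - n| / √n) := by
        gcongr
        exact abs_one_sub_sqrt_div_euclNorm_mul_euclNorm_le g

variable {ν : Measure ℝ} [IsProbabilityMeasure ν]

lemma memLp_euclNorm_sq (hν : MemLp (fun x => x ^ 2) 2 ν) :
    MemLp (fun x : Fin n → ℝ => euclNorm x ^ 2) 2 (Measure.pi fun _ => ν) := by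
  simp_rw [euclNorm_sq]
  exact memLp_finsetSum _ fun i _ =>
    hν.comp_measurePreserving (measurePreserving_eval (fun _ => ν) i)

lemma variance_euclNorm_sq (hν : MemLp (fun x => x ^ 2) 2 ν) :
    Var[fun x : Fin n → ℝ => euclNorm x ^ 2; Measure.pi fun _ => ν] =
      n * Var[fun x => x ^ 2; ν] := by
  have h := variance_sum_pi (μ := fun _ : Fin n => ν) (X := fun _ x => x ^ 2) fun _ => hν
  simpa [euclNorm_sq, Finset.sum_fn] using h

lemma integral_euclNorm_sq (hν : MemLp (fun x => x ^ 2) 2 ν) :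
    ∫ x : Fin n → ℝ, euclNorm x ^ 2 ∂(Measure.pi fun _ => ν) = n * ∫ x, x ^ 2 ∂ν := by
  have hcoord (i : Fin n) : ∫ x, x i ^ 2 ∂(Measure.pi fun _ => ν) = ∫ x, x ^ 2 ∂ν :=
    integral_comp_eval (μ := fun _ : Fin n => ν) hν.aestronglyMeasurable
  have hint (i : Fin n) : Integrable (fun x : Fin n → ℝ => x i ^ 2) (Measure.pi fun _ => ν) :=
    integrable_comp_eval (μ := fun _ : Fin n => ν) (hν.integrable one_le_two)
  simp_rw [euclNorm_sq]
  rw [integral_finsetSum _ fun i _ => hint i]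
  simp [hcoord]

lemma integral_abs_euclNorm_sq_sub_div_sqrt_le (hν : MemLp (fun x => x ^ 2) 2 ν)
    (hν_sq : ∫ x, x ^ 2 ∂ν = 1) :
    ∫ x : Fin n → ℝ, |euclNorm x ^ 2 - n| / √n ∂(Measure.pi fun _ => ν) ≤
      √Var[fun x => x ^ 2; ν] := by
  have h := integral_abs_sub_integral_le_sqrt_variance (memLp_euclNorm_sq (n := n) hν)
  rw [integral_euclNorm_sq hν, hν_sq, mul_one, variance_euclNorm_sq hν,
    Real.sqrt_mul n.cast_nonneg, mul_comm] at h
  rw [integral_div]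
  exact div_le_of_le_mul₀ (Real.sqrt_nonneg _) (Real.sqrt_nonneg _) h

end Normalization

theorem tv_spike_normalization_general {n d : ℕ} {ν : Measure ℝ} [IsProbabilityMeasure ν]
    (hν : MemLp (fun x => x ^ 2) 2 ν) (hν_sq : ∫ x, x ^ 2 ∂ν = 1) (c : ℝ) (u : Fin d → ℝ) :
    tvDist
        (Measure.map
          (fun p : (Fin d → Fin n → ℝ) × (Fin n → ℝ) => fun i j => p.1 i j + c * u i * p.2 j)
          ((Measure.pi fun _ => stdGaussian n).prod (Measure.pi fun _ => ν)))
        (Measure.map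
          (fun p : (Fin d → Fin n → ℝ) × (Fin n → ℝ) =>
            fun i j => p.1 i j + c * (√n / euclNorm p.2) * u i * p.2 j)
          ((Measure.pi fun _ => stdGaussian n).prod (Measure.pi fun _ => ν))) ≤
      √Var[fun x => x ^ 2; ν] / 2 * |c| * euclNorm u := by
  have hint : Integrable (fun g : Fin n → ℝ => |c| * euclNorm u * (|euclNorm g ^ 2 - n| / √n))
      (Measure.pi fun _ => ν) :=
    ((((memLp_euclNorm_sq hν).integrable one_le_two).sub
      (integrable_const _)).abs.div_const _).const_mul _
  refine (tvDist_map_add_prod_le _ (by fun_prop) (by fun_prop) hint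
    (frobeniusNorm_spike_sub_normalized_spike_le c u)).trans ?_
  rw [integral_const_mul]
  have := euclNorm_nonneg u
  calc |c| * euclNorm u * (∫ g, |euclNorm g ^ 2 - n| / √n ∂Measure.pi fun _ => ν) / 2
      ≤ |c| * euclNorm u * √Var[fun x => x ^ 2; ν] / 2 := by
        gcongr
        exact integral_abs_euclNorm_sq_sub_div_sqrt_le hν hν_sq
    _ = √Var[fun x => x ^ 2; ν] / 2 * |c| * euclNorm u := by ring

/-- Normalizing the spike length in the Spiked Covariance Model: for
`Z = X + √θ g uᵀ` with `X ~ N(0, I_n)^{⊗d}`, `g ~ N(0, I_n)` independent of `X` and `u` a unit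
vector, `d_TV(X + √θ g uᵀ, X + √θ (√n/‖g‖) g uᵀ) = O(√θ)` with a universal implicit constant. -/
theorem tv_spike_normalization :
    ∃ C : ℝ, 0 < C ∧ ∀ (n d : ℕ) (θ : ℝ), 0 < θ → ∀ u : Fin d → ℝ, euclNorm u = 1 →
      tvDist
          (Measure.map
            (fun p : (Fin d → Fin n → ℝ) × (Fin n → ℝ) =>
              fun i j => p.1 i j + Real.sqrt θ * u i * p.2 j)
            ((Measure.pi fun _ : Fin d => stdGaussian n).prod (stdGaussian n)))
          (Measure.map
            (fun p : (Fin d → Fin n → ℝ) × (Fin n → ℝ) =>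
              fun i j => p.1 i j + Real.sqrt θ * (Real.sqrt n / euclNorm p.2) * u i * p.2 j)
            ((Measure.pi fun _ : Fin d => stdGaussian n).prod (stdGaussian n))) ≤
        C * Real.sqrt θ := by
  refine ⟨√Var[fun x => x ^ 2; gaussianReal 0 1] / 2 + 1, by positivity, fun n d θ _ u hu => ?_⟩
  have hsq : ∫ x, x ^ 2 ∂gaussianReal 0 1 = 1 := by simp [integral_sq_gaussianReal]
  have h := tv_spike_normalization_general (n := n) (memLp_sq_gaussianReal 0 1) hsq √θ u
  rw [abs_of_nonneg (Real.sqrt_nonneg θ), hu, mul_one] at h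
  refine h.trans ?_
  gcongr
  linarith
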